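/- arXiv:math/0107037 — 6 statements merged into one kernel-verified Lean document; each statement's English description precedes it below -/
import Mathlib

section
/- Let U ⊆ ℂⁿ be open and F : U → ℂ holomorphic with Im HF(z) invertible for every z ∈ U. Define φ_F : U → ℝ^{2n+1} by φ_F(z) = (Re z, Re ∇F(z), 2 Im F(z) − 2 Σ_k Re((∇F(z))_k) · Im(z^k)). Then φ_F is a smooth immersion: its real Fréchet derivative at every point of U is injective. -/
/-!
The derivative of `φ_F` at `z` sends `X` to a vector whose first two components are `Re X` and
`Re (HF(z) X)`. If both vanish, then `X = i Y` with `Y` real and `Re (HF(z) X) = -(Im HF(z)) Y`, so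
nondegeneracy forces `Y = 0`.

Smoothness needs that holomorphic functions of several variables are `C^∞`. By the Schwarz lemma to
second order, the difference quotients of a bounded holomorphic function in a fixed direction
converge uniformly on a smaller ball to the directional derivative. By Cauchy's estimate a uniform
limit of holomorphic functions is holomorphic, so directional derivatives are again holomorphic,
and one iterates.
-/

open Complex Filter Matrix Metric Set
open scoped Topology

section Holomorphic

variable {E F : Type*} [NormedAddCommGroup E] [NormedSpace ℂ E]
  [NormedAddCommGroup F] [NormedSpace ℂ F] {f : E → F} {c z : E} {R M : ℝ}

theorem norm_fderiv_le_of_forall_mem_ball_norm_le (hR : 0 < R)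
    (hd : DifferentiableOn ℂ f (ball c R)) (hM : ∀ w ∈ ball c R, ‖f w‖ ≤ M) :
    ‖fderiv ℂ f c‖ ≤ 2 * M / R := by
  refine norm_fderiv_le_div_of_mapsTo_ball hd (fun w hw => ?_) hR
  rw [mem_closedBall, dist_eq_norm]
  linarith [norm_sub_le (f w) (f c), hM w hw, hM c (mem_ball_self hR)]

theorem norm_sub_sub_fderiv_le_of_forall_mem_ball_norm_le
    (hd : DifferentiableOn ℂ f (ball c R)) (hM : ∀ w ∈ ball c R, ‖f w‖ ≤ M) (hz : z ∈ ball c R) :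
    ‖f z - f c - fderiv ℂ f c (z - c)‖ ≤ 4 * M * (‖z - c‖ / R) ^ 2 := by
  have hR : 0 < R := nonempty_ball.1 ⟨z, hz⟩
  have hf : HasFDerivAt f (fderiv ℂ f c) c :=
    (hd.differentiableAt (ball_mem_nhds c hR)).hasFDerivAt
  let g : E → F := fun w => f w - fderiv ℂ f c (w - c)
  have hgc : g c = f c := by simp [g]
  have hmaps : MapsTo g (ball c R) (closedBall (g c) (4 * M)) := by
    intro w hw
    have hlin : ‖fderiv ℂ f c (w - c)‖ ≤ 2 * M := calc
      _ ≤ ‖fderiv ℂ f c‖ * ‖w - c‖ := (fderiv ℂ f c).le_opNorm _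
      _ ≤ 2 * M / R * R := by
        have hnorm := norm_fderiv_le_of_forall_mem_ball_norm_le hR hd hM
        exact mul_le_mul hnorm (mem_ball_iff_norm.1 hw).le (norm_nonneg _)
          ((norm_nonneg _).trans hnorm)
      _ = 2 * M := div_mul_cancel₀ _ hR.ne'
    rw [mem_closedBall, dist_eq_norm, hgc]
    linarith [norm_sub_le (g w) (f c), norm_sub_le (f w) (fderiv ℂ f c (w - c)), hM w hw,
      hM c (mem_ball_self hR)]
  have hlittle : (g · - g c) =o[𝓝 c] (fun w => ‖w - c‖ ^ 1) := by
    simpa [g, sub_right_comm] using hf.isLittleO.norm_right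
  simpa [g, dist_eq_norm, sub_right_comm] using
    dist_le_mul_div_pow_of_mapsTo_ball_of_isLittleO (by fun_prop) hmaps hlittle hz

theorem uniformCauchySeqOn_fderiv {ι : Type*} {l : Filter ι} {f : ι → E → F} {s : Set E}
    (hR : 0 < R) (hf : ∀ᶠ n in l, DifferentiableOn ℂ (f n) (thickening R s))
    (hcauchy : UniformCauchySeqOn f l (thickening R s)) :
    UniformCauchySeqOn (fun n => fderiv ℂ (f n)) l s := by
  intro u hu
  obtain ⟨ε, hε, hεu⟩ := mem_uniformity_dist.1 hu
  filter_upwards [hcauchy _ (dist_mem_uniformity (by positivity : 0 < ε * R / 4)),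
    hf.prod_mk hf] with p hp ⟨h₁, h₂⟩ z hz
  have hball : ball z R ⊆ thickening R s := ball_subset_thickening hz R
  have hdiff : ∀ n, DifferentiableOn ℂ (f n) (thickening R s) → DifferentiableAt ℂ (f n) z :=
    fun n hn => hn.differentiableAt (isOpen_thickening.mem_nhds (hball (mem_ball_self hR)))
  refine hεu ?_
  calc dist (fderiv ℂ (f p.1) z) (fderiv ℂ (f p.2) z)
      = ‖fderiv ℂ (f p.1 - f p.2) z‖ := by
        rw [fderiv_sub (hdiff _ h₁) (hdiff _ h₂), dist_eq_norm]
    _ ≤ 2 * (ε * R / 4) / R :=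
        norm_fderiv_le_of_forall_mem_ball_norm_le hR ((h₁.sub h₂).mono hball) fun w hw => by
          simpa [dist_eq_norm] using (hp w (hball hw)).le
    _ = ε / 2 := by field_simp; norm_num
    _ < ε := half_lt_self hε

theorem differentiableAt_of_tendstoUniformlyOn [CompleteSpace F] {ι : Type*} {l : Filter ι}
    [l.NeBot] {f : ι → E → F} {g : E → F} {s : Set E} (hs : s ∈ 𝓝 c)
    (hf : ∀ᶠ n in l, DifferentiableOn ℂ (f n) s) (hfg : TendstoUniformlyOn f g l s) :
    DifferentiableAt ℂ g c := by
  obtain ⟨r, hr, hrs⟩ := Metric.mem_nhds_iff.1 hs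
  have hr' := half_pos hr
  have hsub : thickening (r / 2) (ball c (r / 2)) ⊆ s :=
    (Metric.thickening_ball c _ _).trans (by rwa [add_halves])
  have hcauchy : UniformCauchySeqOn (fun n => fderiv ℂ (f n)) l (ball c (r / 2)) :=
    uniformCauchySeqOn_fderiv hr' (hf.mono fun n hn => hn.mono hsub)
      (hfg.uniformCauchySeqOn.mono hsub)
  have hlim : ∀ z ∈ ball c (r / 2), ∃ L, Tendsto (fun n => fderiv ℂ (f n) z) l (𝓝 L) :=
    fun z hz => CompleteSpace.complete (hcauchy.cauchy_map hz)
  choose! g' hg' using hlim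
  have hunif : TendstoUniformlyOnFilter (fun n => fderiv ℂ (f n)) g' l (𝓝 c) :=
    (hcauchy.tendstoUniformlyOn_of_tendsto hg').tendstoUniformlyOnFilter.mono_right
      (le_principal_iff.2 (ball_mem_nhds c hr'))
  refine (hasFDerivAt_of_tendstoUniformlyOnFilter (f := f) hunif ?_ ?_).differentiableAt
  · filter_upwards [hf.prod_mk (eventually_mem_nhds_iff.2 hs)] with p hp
    exact (hp.1.differentiableAt hp.2).hasFDerivAt
  · filter_upwards [hs] with z hz using hfg.tendsto_at hz

theorem tendstoUniformlyOn_slope_fderiv_apply {s : Set E} (hR : 0 < R)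
    (hd : DifferentiableOn ℂ f (thickening R s)) (hM : ∀ w ∈ thickening R s, ‖f w‖ ≤ M) (X : E) :
    TendstoUniformlyOn (fun (t : ℂ) z => t⁻¹ • (f (z + t • X) - f z))
      (fun z => fderiv ℂ f z X) (𝓝[≠] 0) s := by
  rw [Metric.tendstoUniformlyOn_iff]
  intro ε hε
  have hsmall : ∀ᶠ t : ℂ in 𝓝 0, ‖t • X‖ < R :=
    Continuous.tendsto' (by fun_prop) 0 0 (by simp) |>.eventually_lt_const hR
  have hbound : ∀ᶠ t : ℂ in 𝓝 0, 4 * M * (‖X‖ / R) ^ 2 * ‖t‖ < ε :=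
    Continuous.tendsto' (by fun_prop) 0 0 (by simp) |>.eventually_lt_const hε
  filter_upwards [hsmall.filter_mono nhdsWithin_le_nhds, hbound.filter_mono nhdsWithin_le_nhds,
    self_mem_nhdsWithin] with t htR htε ht z hz
  have ht₀ : t ≠ 0 := ht
  have hball : ball z R ⊆ thickening R s := ball_subset_thickening hz R
  have htaylor : ‖f (z + t • X) - f z - t • fderiv ℂ f z X‖ ≤ 4 * M * (‖t • X‖ / R) ^ 2 := by
    simpa using norm_sub_sub_fderiv_le_of_forall_mem_ball_norm_le (hd.mono hball)
      (fun w hw => hM w (hball hw)) (z := z + t • X) (by simpa using htR)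
  calc dist (fderiv ℂ f z X) (t⁻¹ • (f (z + t • X) - f z))
      = ‖t⁻¹ • (f (z + t • X) - f z - t • fderiv ℂ f z X)‖ := by
        rw [smul_sub t⁻¹ (f (z + t • X) - f z), inv_smul_smul₀ ht₀, dist_comm, dist_eq_norm]
    _ ≤ ‖t‖⁻¹ * (4 * M * (‖t • X‖ / R) ^ 2) := by
        rw [norm_smul, norm_inv]
        gcongr
    _ = 4 * M * (‖X‖ / R) ^ 2 * ‖t‖ := by
        have : ‖t‖ ≠ 0 := norm_ne_zero_iff.2 ht₀
        rw [norm_smul]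
        field_simp
    _ < ε := htε

theorem differentiableAt_fderiv_apply [CompleteSpace F]
    (hf : ∀ᶠ w in 𝓝 c, DifferentiableAt ℂ f w) (X : E) :
    DifferentiableAt ℂ (fun w => fderiv ℂ f w X) c := by
  have hbdd : ∀ᶠ w in 𝓝 c, ‖f w‖ < ‖f c‖ + 1 :=
    hf.self_of_nhds.continuousAt.norm.eventually_lt_const (lt_add_one _)
  obtain ⟨r, hr, hball⟩ := Metric.eventually_nhds_iff_ball.1 (hf.and hbdd)
  obtain ⟨R, hR, rfl⟩ : ∃ R > 0, r = R + R := ⟨r / 2, half_pos hr, (add_halves r).symm⟩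
  rw [← _root_.thickening_ball hR hR] at hball
  have hd : DifferentiableOn ℂ f (thickening R (ball c R)) := fun w hw =>
    (hball w hw).1.differentiableWithinAt
  have hslope := tendstoUniformlyOn_slope_fderiv_apply hR hd (fun w hw => (hball w hw).2.le) X
  refine differentiableAt_of_tendstoUniformlyOn (ball_mem_nhds c hR) ?_ hslope
  have hsmall : ∀ᶠ t : ℂ in 𝓝 0, ‖t • X‖ < R :=
    Continuous.tendsto' (by fun_prop) 0 0 (by simp) |>.eventually_lt_const hR
  filter_upwards [hsmall.filter_mono nhdsWithin_le_nhds] with t ht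
  have hshift : MapsTo (· + t • X) (ball c R) (thickening R (ball c R)) := fun w hw =>
    mem_thickening_iff.2 ⟨w, hw, by simpa using ht⟩
  exact ((hd.comp (by fun_prop) hshift).sub (hd.mono (self_subset_thickening hR _))).const_smul t⁻¹

theorem contDiffOn_complex_of_differentiableOn [FiniteDimensional ℂ E] [CompleteSpace F]
    {U : Set E} (hU : IsOpen U) (hf : DifferentiableOn ℂ f U) (n : ℕ∞) : ContDiffOn ℂ n f U := by
  suffices h : ∀ m : ℕ, ContDiffOn ℂ m f U from (contDiffOn_infty.2 h).of_le (mod_cast le_top)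
  intro m
  induction m generalizing f with
  | zero => exact contDiffOn_zero.2 hf.continuousOn
  | succ m ih =>
    have hfderiv (X : E) : DifferentiableOn ℂ (fun w => fderiv ℂ f w X) U := fun w hw =>
      (differentiableAt_fderiv_apply (hf.eventually_differentiableAt (hU.mem_nhds hw))
        X).differentiableWithinAt
    push_cast
    exact (contDiffOn_succ_iff_fderiv_of_isOpen hU).2
      ⟨hf, by simp, contDiffOn_clm_apply.2 fun X => ih (hfderiv X)⟩

end Holomorphic

section ParabolicHypersphere

variable {ι κ : Type*}

/-- The real part `ℂ^ι → ℝ^ι`, taken coordinatewise, as a real-linear map. -/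
noncomputable def rePi (ι : Type*) : (ι → ℂ) →L[ℝ] (ι → ℝ) := .piMap fun _ => reCLM

theorem rePi_mulVec [Fintype ι] (A : Matrix κ ι ℂ) (X : ι → ℂ) :
    rePi κ (A *ᵥ X) = A.map re *ᵥ rePi ι X - A.map im *ᵥ fun i => (X i).im := by
  ext j
  simp [rePi, mulVec, dotProduct]

theorem injective_rePi_prod_rePi_mulVec [Fintype ι] {A : Matrix κ ι ℂ}
    (hA : Function.Injective (A.map im).mulVec) :
    Function.Injective fun X : ι → ℂ => (rePi ι X, rePi κ (A *ᵥ X)) := by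
  intro X Y hXY
  obtain ⟨hre, hreA⟩ := Prod.mk.inj hXY
  rw [rePi_mulVec, rePi_mulVec, hre] at hreA
  have him := hA (sub_right_injective hreA)
  exact funext fun i => Complex.ext (congrFun hre i) (congrFun him i)

/-- The map `(Re z, Re G(z))`. For `G = ∇F` these are the flat coordinates of the special
Kähler manifold determined by `F`. -/
noncomputable def specialCoordinates (G : (ι → ℂ) → (κ → ℂ)) (z : ι → ℂ) : (ι → ℝ) × (κ → ℝ) :=
  (rePi ι z, rePi κ (G z))

theorem hasFDerivAt_specialCoordinates [Finite ι] [Finite κ] {G : (ι → ℂ) → (κ → ℂ)}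
    {L : (ι → ℂ) →L[ℝ] (κ → ℂ)} {z : ι → ℂ} (hG : HasFDerivAt G L z) :
    HasFDerivAt (specialCoordinates G) ((rePi ι).prod (rePi κ ∘L L)) z := by
  have := Fintype.ofFinite ι
  have := Fintype.ofFinite κ
  exact (rePi ι).hasFDerivAt.prodMk ((rePi κ).hasFDerivAt.comp z hG)

variable [Fintype ι]

/-- The map `φ_F` realizing a special Kähler manifold as a parabolic hypersphere, with `G` in the
role of `∇F`. -/
noncomputable def parabolicHypersphereMap (F : (ι → ℂ) → ℂ) (G : (ι → ℂ) → (ι → ℂ)) (z : ι → ℂ) :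
    (ι → ℝ) × (ι → ℝ) × ℝ :=
  ((specialCoordinates G z).1, (specialCoordinates G z).2,
    2 * (F z).im - 2 * ∑ k, (G z k).re * (z k).im)

theorem contDiffOn_parabolicHypersphereMap {F : (ι → ℂ) → ℂ} {G : (ι → ℂ) → (ι → ℂ)}
    {U : Set (ι → ℂ)} {n : WithTop ℕ∞} (hF : ContDiffOn ℝ n F U) (hG : ContDiffOn ℝ n G U) :
    ContDiffOn ℝ n (parabolicHypersphereMap F G) U := by
  have hre {g : (ι → ℂ) → ℂ} (hg : ContDiffOn ℝ n g U) : ContDiffOn ℝ n (fun z => (g z).re) U :=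
    reCLM.contDiff.comp_contDiffOn hg
  have him {g : (ι → ℂ) → ℂ} (hg : ContDiffOn ℝ n g U) : ContDiffOn ℝ n (fun z => (g z).im) U :=
    imCLM.contDiff.comp_contDiffOn hg
  have hcoord (i : ι) : ContDiffOn ℝ n (fun z : ι → ℂ => z i) U := (contDiff_apply ℝ ℂ i).contDiffOn
  have hGcoord (i : ι) : ContDiffOn ℝ n (fun z => G z i) U := contDiffOn_pi.1 hG i
  refine (contDiffOn_pi.2 fun i => hre (hcoord i)).prodMk
    ((contDiffOn_pi.2 fun i => hre (hGcoord i)).prodMk ?_)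
  exact (contDiffOn_const.mul (him hF)).sub (contDiffOn_const.mul
    (ContDiffOn.sum fun k _ => (hre (hGcoord k)).mul (him (hcoord k))))

theorem injective_of_hasFDerivAt_parabolicHypersphereMap {F : (ι → ℂ) → ℂ}
    {G : (ι → ℂ) → (ι → ℂ)} {z : ι → ℂ} {φ' : (ι → ℂ) →L[ℝ] (ι → ℝ) × (ι → ℝ) × ℝ}
    (hφ : HasFDerivAt (parabolicHypersphereMap F G) φ' z) {A : Matrix ι ι ℂ}
    {L : (ι → ℂ) →L[ℂ] (ι → ℂ)} (hG : HasFDerivAt G L z) (hL : ∀ X, L X = A *ᵥ X)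
    (hA : Function.Injective (A.map im).mulVec) : Function.Injective φ' := by
  have hcoord := (hφ.fst.prodMk hφ.snd.fst).unique
    (hasFDerivAt_specialCoordinates (hG.restrictScalars ℝ))
  have hφ' (X : ι → ℂ) : ((φ' X).1, (φ' X).2.1) = (rePi ι X, rePi ι (A *ᵥ X)) := by
    simpa [hL] using DFunLike.congr_fun hcoord X
  refine fun X Y hXY => injective_rePi_prod_rePi_mulVec hA ?_
  simp only [← hφ', hXY]

end ParabolicHypersphere

/-- Let `U ⊆ ℂⁿ` be open and `F` holomorphic on `U` (with holomorphic gradient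
`gradF` and Hessian `hessF`) such that `Im (hessF z)` is invertible for every `z ∈ U`. Then
`φ_F(z) = (Re z, Re ∇F(z), 2 Im F(z) − 2 ∑_k Re((∇F(z))_k) Im(z^k))` is a smooth immersion:
its real Fréchet derivative at every point of `U` is injective. -/
theorem phiF_smooth_immersion
    {n : ℕ} (hn : 1 ≤ n) (U : Set (Fin n → ℂ)) (hU : IsOpen U)
    (F : (Fin n → ℂ) → ℂ) (gradF : (Fin n → ℂ) → (Fin n → ℂ))
    (hessF : (Fin n → ℂ) → Matrix (Fin n) (Fin n) ℂ)
    (hF : ∀ z ∈ U, ∃ L : (Fin n → ℂ) →L[ℂ] ℂ,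
      HasFDerivAt F L z ∧ ∀ X, L X = ∑ k, gradF z k * X k)
    (hgrad : ∀ z ∈ U, ∃ L : (Fin n → ℂ) →L[ℂ] (Fin n → ℂ),
      HasFDerivAt gradF L z ∧ ∀ X, L X = (hessF z).mulVec X)
    (hnondeg : ∀ z ∈ U, IsUnit ((hessF z).map Complex.im))
    (φ : (Fin n → ℂ) → (Fin n → ℝ) × (Fin n → ℝ) × ℝ)
    (hφ : ∀ z, φ z = ((fun i => (z i).re), (fun i => (gradF z i).re),
      2 * (F z).im - 2 * ∑ k, (gradF z k).re * (z k).im)) :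
    ContDiffOn ℝ (⊤ : ℕ∞) φ U ∧
    ∀ z ∈ U, ∃ L : (Fin n → ℂ) →L[ℝ] (Fin n → ℝ) × (Fin n → ℝ) × ℝ,
      HasFDerivAt φ L z ∧ Function.Injective L := by
  obtain rfl : φ = parabolicHypersphereMap F gradF := funext hφ
  have hFhol : DifferentiableOn ℂ F U := fun z hz =>
    let ⟨_, hL, _⟩ := hF z hz
    hL.differentiableAt.differentiableWithinAt
  have hgradhol : DifferentiableOn ℂ gradF U := fun z hz =>
    let ⟨_, hL, _⟩ := hgrad z hz
    hL.differentiableAt.differentiableWithinAt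
  have hsmooth : ContDiffOn ℝ (⊤ : ℕ∞) (parabolicHypersphereMap F gradF) U :=
    contDiffOn_parabolicHypersphereMap
      ((contDiffOn_complex_of_differentiableOn hU hFhol ⊤).restrict_scalars ℝ)
      ((contDiffOn_complex_of_differentiableOn hU hgradhol ⊤).restrict_scalars ℝ)
  refine ⟨hsmooth, fun z hz => ?_⟩
  have hφz : HasFDerivAt (parabolicHypersphereMap F gradF) _ z :=
    ((hsmooth.contDiffAt (hU.mem_nhds hz)).differentiableAt (by simp)).hasFDerivAt
  obtain ⟨L, hL, hLX⟩ := hgrad z hz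
  exact ⟨_, hφz, injective_of_hasFDerivAt_parabolicHypersphereMap hφz hL hLX
    (mulVec_injective_of_isUnit (hnondeg z hz))⟩
end

section
/- With the notation of the coordinate setup: for all indices i, j ∈ {1,…,n} and at every point of W, Σ_{k=1}^n ( (∂u^k/∂x^i)(∂v_k/∂y_j) − (∂u^k/∂y_j)(∂v_k/∂x^i) ) = δ_i^j (Kronecker delta). -/
/-- Partial derivative of a real function on `ℝⁿ × ℝⁿ` in the direction of the
`i`-th coordinate of the first factor (the `x`-coordinates). -/
noncomputable def pdx {n : ℕ} (g : (Fin n → ℝ) × (Fin n → ℝ) → ℝ)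
    (i : Fin n) (p : (Fin n → ℝ) × (Fin n → ℝ)) : ℝ :=
  fderiv ℝ g p (Pi.single i 1, 0)

/-- Partial derivative of a real function on `ℝⁿ × ℝⁿ` in the direction of the
`j`-th coordinate of the second factor (the `y`-coordinates). -/
noncomputable def pdy {n : ℕ} (g : (Fin n → ℝ) × (Fin n → ℝ) → ℝ)
    (j : Fin n) (p : (Fin n → ℝ) × (Fin n → ℝ)) : ℝ :=
  fderiv ℝ g p (0, Pi.single j 1)

/-!
The graph of `∇F` is Lagrangian for the complex symplectic form `ω = ∑ₖ dzᵏ ∧ dwₖ`, because the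
Hessian of `F` is symmetric. Writing `zᵏ = xᵏ + i uᵏ` and `wₖ = yₖ + i vₖ`, the real part of `ω` is
`∑ₖ dxᵏ ∧ dyₖ - ∑ₖ duᵏ ∧ dvₖ`. On the graph, parametrized by `(x, y)` through `Ψ`, the two real
forms therefore agree, and the claim is their equality evaluated on `∂/∂xⁱ` and `∂/∂yⱼ`.
-/

open Matrix Topology

theorem apply_eq_self_of_hasFDerivAt {𝕜 E E' : Type*} [NontriviallyNormedField 𝕜]
    [NormedAddCommGroup E] [NormedSpace 𝕜 E] [NormedAddCommGroup E'] [NormedSpace 𝕜 E']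
    {T : E' →L[𝕜] E} {γ : E → E'} {γ' : E →L[𝕜] E'} {p : E} (hγ : HasFDerivAt γ γ' p)
    (hT : ∀ᶠ q in 𝓝 p, T (γ q) = q) (v : E) : T (γ' v) = v :=
  have hTγ : HasFDerivAt (fun q => T (γ q)) (T.comp γ') p := T.hasFDerivAt.comp p hγ
  DFunLike.congr_fun (hTγ.unique ((hasFDerivAt_id p).congr_of_eventuallyEq hT)) v

theorem fderiv_im_apply {ι E : Type*} [NormedAddCommGroup E] [NormedSpace ℝ E]
    {f : E → ι → ℂ} {f' : E →L[ℝ] ι → ℂ} {p : E} (hf : HasFDerivAt f f' p) (k : ι) (v : E) :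
    fderiv ℝ (fun q => (f q k).im) p v = (f' v k).im :=
  DFunLike.congr_fun (Complex.imCLM.hasFDerivAt.comp p (hasFDerivAt_pi'.1 hf k)).fderiv v

section SymplecticForm

variable {ι R : Type*} [Fintype ι] [CommRing R]

/-- The standard symplectic form `∑ₖ dxᵏ ∧ dyₖ` on pairs `(x, y)` of vectors, with coefficients in
a commutative ring. Over `ℂ` it is the complex-bilinear form, without conjugation. -/
def symplecticForm (X Y : (ι → R) × (ι → R)) : R :=
  X.1 ⬝ᵥ Y.2 - Y.1 ⬝ᵥ X.2

theorem symplecticForm_mulVec_eq_zero {H : Matrix ι ι R} (hH : H.IsSymm) (X Y : ι → R) :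
    symplecticForm (X, H *ᵥ X) (Y, H *ᵥ Y) = 0 := by
  rw [symplecticForm, sub_eq_zero, ← dotProduct_transpose_mulVec, hH.eq]

end SymplecticForm

section RealAndImaginaryParts

variable {ι : Type*}

/-- The coordinatewise real part `ℂⁿ × ℂⁿ → ℝⁿ × ℝⁿ`, as a continuous real-linear map. -/
noncomputable def rePart : (ι → ℂ) × (ι → ℂ) →L[ℝ] (ι → ℝ) × (ι → ℝ) :=
  (ContinuousLinearMap.piMap fun _ => Complex.reCLM).prodMap
    (ContinuousLinearMap.piMap fun _ => Complex.reCLM)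

/-- The coordinatewise imaginary part `ℂⁿ × ℂⁿ → ℝⁿ × ℝⁿ`, as a continuous real-linear map. -/
noncomputable def imPart : (ι → ℂ) × (ι → ℂ) →L[ℝ] (ι → ℝ) × (ι → ℝ) :=
  (ContinuousLinearMap.piMap fun _ => Complex.imCLM).prodMap
    (ContinuousLinearMap.piMap fun _ => Complex.imCLM)

theorem re_symplecticForm [Fintype ι] (Z Z' : (ι → ℂ) × (ι → ℂ)) :
    (symplecticForm Z Z').re =
      symplecticForm (rePart Z) (rePart Z') - symplecticForm (imPart Z) (imPart Z') := by
  simp only [symplecticForm, dotProduct, rePart, imPart, ContinuousLinearMap.coe_prodMap', Prod.map,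
    ContinuousLinearMap.coe_piMap', Pi.map, Complex.reCLM_apply, Complex.imCLM_apply,
    Complex.sub_re, Complex.re_sum, Complex.mul_re, Finset.sum_sub_distrib]
  ring

theorem symplecticForm_imPart_of_eq_zero [Fintype ι] {Z Z' : (ι → ℂ) × (ι → ℂ)}
    (h : symplecticForm Z Z' = 0) :
    symplecticForm (imPart Z) (imPart Z') = symplecticForm (rePart Z) (rePart Z') := by
  have hre := re_symplecticForm Z Z'
  rw [h, Complex.zero_re] at hre
  exact (sub_eq_zero.mp hre.symm).symm

theorem symplecticForm_imPart_apply_of_hasFDerivAt [Fintype ι]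
    {γ : (ι → ℝ) × (ι → ℝ) → (ι → ℂ) × (ι → ℂ)}
    {γ' : (ι → ℝ) × (ι → ℝ) →L[ℝ] (ι → ℂ) × (ι → ℂ)} {p : (ι → ℝ) × (ι → ℝ)}
    (hγ : HasFDerivAt γ γ' p) (hre : ∀ᶠ q in 𝓝 p, rePart (γ q) = q) {X Y : (ι → ℝ) × (ι → ℝ)}
    (hXY : symplecticForm (γ' X) (γ' Y) = 0) :
    symplecticForm (imPart (γ' X)) (imPart (γ' Y)) = symplecticForm X Y := by
  rw [symplecticForm_imPart_of_eq_zero hXY, apply_eq_self_of_hasFDerivAt hγ hre,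
    apply_eq_self_of_hasFDerivAt hγ hre]

end RealAndImaginaryParts

theorem lagrangian_rel_delta_general {n : ℕ} {G : (Fin n → ℂ) → Fin n → ℂ}
    {L : (Fin n → ℂ) →L[ℂ] Fin n → ℂ} {H : Matrix (Fin n) (Fin n) ℂ}
    {Ψ : (Fin n → ℝ) × (Fin n → ℝ) → Fin n → ℂ} {p : (Fin n → ℝ) × (Fin n → ℝ)}
    (hΨ : DifferentiableAt ℝ Ψ p) (hG : HasFDerivAt G L (Ψ p)) (hL : ∀ X, L X = H *ᵥ X)
    (hH : H.IsSymm)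
    (hinv : ∀ᶠ q in 𝓝 p, (fun k => (Ψ q k).re, fun k => (G (Ψ q) k).re) = q) (i j : Fin n) :
    ∑ k, (pdx (fun q => (Ψ q k).im) i p * pdy (fun q => (G (Ψ q) k).im) j p
        - pdy (fun q => (Ψ q k).im) j p * pdx (fun q => (G (Ψ q) k).im) i p)
      = if i = j then (1 : ℝ) else 0 := by
  obtain ⟨D, hD⟩ := hΨ
  have hGD : HasFDerivAt (fun q => G (Ψ q)) ((L.restrictScalars ℝ).comp D) p :=
    (hG.restrictScalars ℝ).comp p hD
  let X : (Fin n → ℝ) × (Fin n → ℝ) := (Pi.single i 1, 0)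
  let Y : (Fin n → ℝ) × (Fin n → ℝ) := (0, Pi.single j 1)
  have hisotropic : symplecticForm (D X, L (D X)) (D Y, L (D Y)) = 0 := by
    simpa only [hL] using symplecticForm_mulVec_eq_zero hH (D X) (D Y)
  calc
    _ = symplecticForm (imPart (D X, L (D X))) (imPart (D Y, L (D Y))) := by
      simp [pdx, pdy, fderiv_im_apply hD, fderiv_im_apply hGD, imPart, symplecticForm, dotProduct,
        X, Y]
    _ = symplecticForm X Y :=
      symplecticForm_imPart_apply_of_hasFDerivAt (hD.prodMk hGD) hinv hisotropic
    _ = if i = j then 1 else 0 := by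
      simp [symplecticForm, X, Y, Pi.single_apply, eq_comm]

/-- `∑_k (∂u^k/∂x^i · ∂v_k/∂y_j − ∂u^k/∂y_j · ∂v_k/∂x^i) = δ_i^j` on `W`. -/
theorem lagrangian_rel_delta
    {n : ℕ} (hn : 1 ≤ n) (U : Set (Fin n → ℂ)) (hU : IsOpen U)
    (F : (Fin n → ℂ) → ℂ) (gradF : (Fin n → ℂ) → (Fin n → ℂ))
    (hessF : (Fin n → ℂ) → Matrix (Fin n) (Fin n) ℂ)
    (hF : ∀ z ∈ U, ∃ L : (Fin n → ℂ) →L[ℂ] ℂ,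
      HasFDerivAt F L z ∧ ∀ X, L X = ∑ k, gradF z k * X k)
    (hgrad : ∀ z ∈ U, ∃ L : (Fin n → ℂ) →L[ℂ] (Fin n → ℂ),
      HasFDerivAt gradF L z ∧ ∀ X, L X = (hessF z).mulVec X)
    (hsymm : ∀ z ∈ U, (hessF z).IsSymm)
    (hnondeg : ∀ z ∈ U, IsUnit ((hessF z).map Complex.im))
    (W : Set ((Fin n → ℝ) × (Fin n → ℝ))) (hW : IsOpen W)
    (Ψ : (Fin n → ℝ) × (Fin n → ℝ) → (Fin n → ℂ))
    (hΨU : ∀ p ∈ W, Ψ p ∈ U)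
    (hΨsmooth : ContDiffOn ℝ (⊤ : ℕ∞) Ψ W)
    (hΨinv : ∀ p ∈ W,
      ((fun i => (Ψ p i).re, fun i => (gradF (Ψ p) i).re) :
        (Fin n → ℝ) × (Fin n → ℝ)) = p) :
    ∀ i j : Fin n, ∀ p ∈ W,
      ∑ k, (pdx (fun q => (Ψ q k).im) i p * pdy (fun q => (gradF (Ψ q) k).im) j p
          - pdy (fun q => (Ψ q k).im) j p * pdx (fun q => (gradF (Ψ q) k).im) i p)
        = if i = j then (1 : ℝ) else 0 := by
  intro i j p hp
  have hWp : W ∈ 𝓝 p := hW.mem_nhds hp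
  obtain ⟨L, hL, hLX⟩ := hgrad (Ψ p) (hΨU p hp)
  exact lagrangian_rel_delta_general ((hΨsmooth.contDiffAt hWp).differentiableAt (by simp))
    hL hLX (hsymm (Ψ p) (hΨU p hp)) (Filter.eventually_of_mem hWp hΨinv) i j
end

section
/- With the notation of the coordinate setup: for all indices i, j ∈ {1,…,n} and at every point of W, Σ_{k=1}^n (∂u^k/∂x^i)(∂v_k/∂x^j) = Σ_{k=1}^n (∂u^k/∂x^j)(∂v_k/∂x^i). -/
/-!
Write `z = Ψ` and `w = G ∘ Ψ` with `G = ∇F`. The derivative of `G` is the Hessian of `F`, which is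
symmetric, so the holomorphic two-form `∑ₖ dzₖ ∧ dwₖ` vanishes on the graph of `G`. Taking real
parts with `z = x + i u` and `w = y + i v` gives `∑ₖ dxₖ ∧ dyₖ = ∑ₖ duₖ ∧ dvₖ`. The left-hand side
vanishes on a pair of directions along which `y` is constant.
-/

open Complex Filter Matrix Topology

theorem dotProduct_mulVec_comm_of_isSymm {ι R : Type*} [Fintype ι] [CommSemiring R]
    {A : Matrix ι ι R} (hA : A.IsSymm) (x y : ι → R) : x ⬝ᵥ A *ᵥ y = y ⬝ᵥ A *ᵥ x := by
  rw [dotProduct_mulVec, ← mulVec_transpose, hA.eq, dotProduct_comm]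

theorem re_dotProduct {ι : Type*} [Fintype ι] (x y : ι → ℂ) :
    (x ⬝ᵥ y).re = ∑ k, ((x k).re * (y k).re - (x k).im * (y k).im) := by
  simp only [dotProduct, re_sum, mul_re]

theorem fderiv_clm_comp_apply {𝕜 ι E F F' : Type*} [NontriviallyNormedField 𝕜]
    [NormedAddCommGroup E] [NormedSpace 𝕜 E] [NormedAddCommGroup F] [NormedSpace 𝕜 F]
    [NormedAddCommGroup F'] [NormedSpace 𝕜 F'] (A : F →L[𝕜] F') {f : E → ι → F}
    {f' : E →L[𝕜] ι → F} {p : E} (hf : HasFDerivAt f f' p) (k : ι) (v : E) :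
    fderiv 𝕜 (fun q ↦ A (f q k)) p v = A (f' v k) := by
  have hAf := A.hasFDerivAt.comp p (hasFDerivAt_pi'.1 hf k)
  exact congrArg (· v) hAf.fderiv

theorem fderiv_apply_inl_eq_zero_of_eventuallyEq_snd {ι E : Type*} [Finite ι]
    [NormedAddCommGroup E] [NormedSpace ℝ E] {f : E × (ι → ℝ) → ι → ℝ} {p : E × (ι → ℝ)}
    (hf : f =ᶠ[𝓝 p] Prod.snd) (k : ι) (a : E) : fderiv ℝ (fun q ↦ f q k) p (a, 0) = 0 := by
  have := Fintype.ofFinite ι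
  have hsnd : (fun q ↦ f q k) =ᶠ[𝓝 p] fun q ↦ q.2 k := hf.fun_comp (· k)
  rw [hsnd.fderiv_eq]
  exact fderiv_clm_comp_apply (.id ℝ ℝ) hasFDerivAt_snd k (a, 0)

section Lagrangian

variable {ι E : Type*} [Fintype ι] [NormedAddCommGroup E] [NormedSpace ℝ E]

/-- The value at `p`, on the pair of directions `a`, `b`, of the two-form `∑ₖ duₖ ∧ dvₖ`, for two
families of real functions `u` and `v`. Like `fderiv`, it is only meaningful where all of them are
differentiable. -/
noncomputable def sumWedge (u v : ι → E → ℝ) (p a b : E) : ℝ :=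
  ∑ k, (fderiv ℝ (u k) p a * fderiv ℝ (v k) p b - fderiv ℝ (u k) p b * fderiv ℝ (v k) p a)

theorem sumWedge_re_eq_sumWedge_im {z w : E → ι → ℂ} {z' w' : E →L[ℝ] ι → ℂ} {p a b : E}
    (hz : HasFDerivAt z z' p) (hw : HasFDerivAt w w' p) (hab : z' a ⬝ᵥ w' b = z' b ⬝ᵥ w' a) :
    sumWedge (fun k q ↦ (z q k).re) (fun k q ↦ (w q k).re) p a b =
      sumWedge (fun k q ↦ (z q k).im) (fun k q ↦ (w q k).im) p a b := by
  have hre := congrArg re hab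
  simp only [re_dotProduct, Finset.sum_sub_distrib] at hre
  simp only [sumWedge, ← reCLM_apply, ← imCLM_apply, fderiv_clm_comp_apply _ hz,
    fderiv_clm_comp_apply _ hw, Finset.sum_sub_distrib]
  simp only [reCLM_apply, imCLM_apply]
  linarith

theorem sumWedge_eq_zero_of_fderiv_eq_zero {u v : ι → E → ℝ} {p a b : E}
    (ha : ∀ k, fderiv ℝ (v k) p a = 0) (hb : ∀ k, fderiv ℝ (v k) p b = 0) :
    sumWedge u v p a b = 0 := by
  simp [sumWedge, ha, hb]

theorem lagrangian_rel_xx_general {G : (ι → ℂ) → ι → ℂ} {L : (ι → ℂ) →L[ℂ] ι → ℂ}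
    {H : Matrix ι ι ℂ} {Ψ : E × (ι → ℝ) → ι → ℂ} {p : E × (ι → ℝ)}
    (hG : HasFDerivAt G L (Ψ p)) (hL : ∀ X, L X = H *ᵥ X) (hH : H.IsSymm)
    (hΨ : DifferentiableAt ℝ Ψ p)
    (hre : (fun q k ↦ (G (Ψ q) k).re) =ᶠ[𝓝 p] Prod.snd) (a b : E) :
    ∑ k, fderiv ℝ (fun q ↦ (Ψ q k).im) p (a, 0) * fderiv ℝ (fun q ↦ (G (Ψ q) k).im) p (b, 0) =
      ∑ k, fderiv ℝ (fun q ↦ (Ψ q k).im) p (b, 0) *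
        fderiv ℝ (fun q ↦ (G (Ψ q) k).im) p (a, 0) := by
  have hGΨ : HasFDerivAt (fun q ↦ G (Ψ q)) ((L.restrictScalars ℝ).comp (fderiv ℝ Ψ p)) p :=
    (hG.restrictScalars ℝ).comp p hΨ.hasFDerivAt
  have isotropic (X Y : ι → ℂ) : X ⬝ᵥ L Y = Y ⬝ᵥ L X := by
    simpa only [hL] using dotProduct_mulVec_comm_of_isSymm hH X Y
  have re_eq_im := sumWedge_re_eq_sumWedge_im (a := (a, 0)) (b := (b, 0)) hΨ.hasFDerivAt hGΨ
    (isotropic _ _)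
  have fderiv_re_eq_zero := fderiv_apply_inl_eq_zero_of_eventuallyEq_snd hre
  rw [sumWedge_eq_zero_of_fderiv_eq_zero (fderiv_re_eq_zero · a) (fderiv_re_eq_zero · b)]
    at re_eq_im
  rw [← sub_eq_zero, ← Finset.sum_sub_distrib]
  exact re_eq_im.symm

end Lagrangian

/-- `∑_k (∂u^k/∂x^i)(∂v_k/∂x^j) = ∑_k (∂u^k/∂x^j)(∂v_k/∂x^i)` on `W`. -/
theorem lagrangian_rel_xx
    {n : ℕ} (hn : 1 ≤ n) (U : Set (Fin n → ℂ)) (hU : IsOpen U)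
    (F : (Fin n → ℂ) → ℂ) (gradF : (Fin n → ℂ) → (Fin n → ℂ))
    (hessF : (Fin n → ℂ) → Matrix (Fin n) (Fin n) ℂ)
    (hF : ∀ z ∈ U, ∃ L : (Fin n → ℂ) →L[ℂ] ℂ,
      HasFDerivAt F L z ∧ ∀ X, L X = ∑ k, gradF z k * X k)
    (hgrad : ∀ z ∈ U, ∃ L : (Fin n → ℂ) →L[ℂ] (Fin n → ℂ),
      HasFDerivAt gradF L z ∧ ∀ X, L X = (hessF z).mulVec X)
    (hsymm : ∀ z ∈ U, (hessF z).IsSymm)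
    (hnondeg : ∀ z ∈ U, IsUnit ((hessF z).map Complex.im))
    (W : Set ((Fin n → ℝ) × (Fin n → ℝ))) (hW : IsOpen W)
    (Ψ : (Fin n → ℝ) × (Fin n → ℝ) → (Fin n → ℂ))
    (hΨU : ∀ p ∈ W, Ψ p ∈ U)
    (hΨsmooth : ContDiffOn ℝ (⊤ : ℕ∞) Ψ W)
    (hΨinv : ∀ p ∈ W,
      ((fun i => (Ψ p i).re, fun i => (gradF (Ψ p) i).re) :
        (Fin n → ℝ) × (Fin n → ℝ)) = p) :
    ∀ i j : Fin n, ∀ p ∈ W,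
      ∑ k, pdx (fun q => (Ψ q k).im) i p * pdx (fun q => (gradF (Ψ q) k).im) j p
        = ∑ k, pdx (fun q => (Ψ q k).im) j p * pdx (fun q => (gradF (Ψ q) k).im) i p := by
  intro i j p hp
  obtain ⟨L, hL, hLX⟩ := hgrad _ (hΨU p hp)
  have hWp := hW.mem_nhds hp
  exact lagrangian_rel_xx_general hL hLX (hsymm _ (hΨU p hp))
    ((hΨsmooth.contDiffAt hWp).differentiableAt (by simp))
    (mem_of_superset hWp fun q hq ↦ congrArg Prod.snd (hΨinv q hq)) _ _
end

section
/- With the notation of the coordinate setup: for all indices i, j ∈ {1,…,n} and at every point of W, ∂u^i/∂x^j = −∂v_j/∂y_i. -/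
/-!
The form `ω = Im ∑ dzᵏ ∧ dwₖ` vanishes on the graph `w = ∇F z` because the Hessian of `F` is
symmetric. With `z = x + iu` and `w = y + iv`, it reads `ω = ∑ (dxᵏ ∧ dvₖ + duᵏ ∧ dyₖ)`, so in the
coordinates `(x, y)` of the graph, `0 = ω(∂/∂xʲ, ∂/∂yᵢ) = ∂vⱼ/∂yᵢ + ∂uⁱ/∂xʲ`.
-/

open Filter Topology

section Derivatives

variable {ι E : Type*} [NormedAddCommGroup E] [NormedSpace ℝ E]
  {f : E → ι → ℂ} {A : E →L[ℝ] ι → ℂ} {p : E}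

lemma fderiv_im_coord_apply (hf : HasFDerivAt f A p) (k : ι) (a : E) :
    fderiv ℝ (fun q => (f q k).im) p a = (A a k).im :=
  DFunLike.congr_fun (Complex.imCLM.hasFDerivAt.comp p (hasFDerivAt_pi'.1 hf k)).fderiv a

lemma re_apply_eq_of_hasFDerivAt_of_eventuallyEq (hf : HasFDerivAt f A p) {B : E →L[ℝ] ι → ℝ}
    (hB : (fun q k => (f q k).re) =ᶠ[𝓝 p] B) (a : E) :
    (fun k => (A a k).re) = B a := by
  have hre : HasFDerivAt (fun q k => (f q k).re)
      (.pi fun k => Complex.reCLM ∘L .proj k ∘L A) p :=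
    hasFDerivAt_pi.2 fun k => Complex.reCLM.hasFDerivAt.comp p (hasFDerivAt_pi'.1 hf k)
  exact DFunLike.congr_fun (hre.unique (B.hasFDerivAt.congr_of_eventuallyEq hB)) a

end Derivatives

section DotProduct

variable {ι : Type*} [Fintype ι]

lemma im_dotProduct (z w : ι → ℂ) :
    (z ⬝ᵥ w).im =
      (fun k => (z k).re) ⬝ᵥ (fun k => (w k).im) + (fun k => (z k).im) ⬝ᵥ fun k => (w k).re := by
  simp only [dotProduct, Complex.im_sum, Complex.mul_im, Finset.sum_add_distrib]

lemma dotProduct_mulVec_comm_of_isSymm_s9 {R : Type*} [CommSemiring R] {M : Matrix ι ι R}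
    (hM : M.IsSymm) (X Y : ι → R) : X ⬝ᵥ M.mulVec Y = Y ⬝ᵥ M.mulVec X := by
  rw [← Matrix.dotProduct_transpose_mulVec, hM.eq]

end DotProduct

/-- The symmetry of `L` says that the tangent space of the graph of `G` at `Ψ p` is Lagrangian
for `Im ∑ dzᵏ ∧ dwₖ`. -/
theorem lagrangian_rel_ux_vy_general {ι : Type*} [Fintype ι] [DecidableEq ι]
    {G : (ι → ℂ) → ι → ℂ} {L : (ι → ℂ) →L[ℝ] ι → ℂ}
    {Ψ : (ι → ℝ) × (ι → ℝ) → ι → ℂ} {p : (ι → ℝ) × (ι → ℝ)}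
    (hG : HasFDerivAt G L (Ψ p)) (hL : ∀ X Y, (X ⬝ᵥ L Y).im = (Y ⬝ᵥ L X).im)
    (hΨ : DifferentiableAt ℝ Ψ p)
    (hΨinv : ∀ᶠ q in 𝓝 p, (fun k => (Ψ q k).re, fun k => (G (Ψ q) k).re) = q) (i j : ι) :
    fderiv ℝ (fun q => (Ψ q i).im) p (Pi.single j 1, 0) =
      -fderiv ℝ (fun q => (G (Ψ q) j).im) p (0, Pi.single i 1) := by
  set D := fderiv ℝ Ψ p
  have hz : HasFDerivAt Ψ D p := hΨ.hasFDerivAt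
  have hw : HasFDerivAt (fun q => G (Ψ q)) (L ∘L D) p := hG.comp p hz
  have re_z (a) : (fun k => (D a k).re) = a.1 :=
    re_apply_eq_of_hasFDerivAt_of_eventuallyEq hz (B := .fst ℝ _ _)
      (hΨinv.mono fun _ hq => congrArg Prod.fst hq) a
  have re_w (a) : (fun k => (L (D a) k).re) = a.2 :=
    re_apply_eq_of_hasFDerivAt_of_eventuallyEq hw (B := .snd ℝ _ _)
      (hΨinv.mono fun _ hq => congrArg Prod.snd hq) a
  have im_pairing (a b) :
      (D a ⬝ᵥ L (D b)).im = a.1 ⬝ᵥ (fun k => (L (D b) k).im) + (fun k => (D a k).im) ⬝ᵥ b.2 := by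
    rw [im_dotProduct, re_z, re_w]
  have isotropic : (L (D (0, Pi.single i 1)) j).im + (D (Pi.single j 1, 0) i).im = 0 := by
    simpa [im_pairing] using hL (D (Pi.single j 1, 0)) (D (0, Pi.single i 1))
  rw [fderiv_im_coord_apply hz, fderiv_im_coord_apply hw]
  exact eq_neg_of_add_eq_zero_right isotropic

/-- `∂u^i/∂x^j = −∂v_j/∂y_i` on `W`. -/
theorem lagrangian_rel_ux_vy
    {n : ℕ} (hn : 1 ≤ n) (U : Set (Fin n → ℂ)) (hU : IsOpen U)
    (F : (Fin n → ℂ) → ℂ) (gradF : (Fin n → ℂ) → (Fin n → ℂ))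
    (hessF : (Fin n → ℂ) → Matrix (Fin n) (Fin n) ℂ)
    (hF : ∀ z ∈ U, ∃ L : (Fin n → ℂ) →L[ℂ] ℂ,
      HasFDerivAt F L z ∧ ∀ X, L X = ∑ k, gradF z k * X k)
    (hgrad : ∀ z ∈ U, ∃ L : (Fin n → ℂ) →L[ℂ] (Fin n → ℂ),
      HasFDerivAt gradF L z ∧ ∀ X, L X = (hessF z).mulVec X)
    (hsymm : ∀ z ∈ U, (hessF z).IsSymm)
    (hnondeg : ∀ z ∈ U, IsUnit ((hessF z).map Complex.im))
    (W : Set ((Fin n → ℝ) × (Fin n → ℝ))) (hW : IsOpen W)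
    (Ψ : (Fin n → ℝ) × (Fin n → ℝ) → (Fin n → ℂ))
    (hΨU : ∀ p ∈ W, Ψ p ∈ U)
    (hΨsmooth : ContDiffOn ℝ (⊤ : ℕ∞) Ψ W)
    (hΨinv : ∀ p ∈ W,
      ((fun i => (Ψ p i).re, fun i => (gradF (Ψ p) i).re) :
        (Fin n → ℝ) × (Fin n → ℝ)) = p) :
    ∀ i j : Fin n, ∀ p ∈ W,
      pdx (fun q => (Ψ q i).im) j p = - pdy (fun q => (gradF (Ψ q) j).im) i p := by
  intro i j p hp
  have hWp : W ∈ 𝓝 p := hW.mem_nhds hp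
  obtain ⟨L, hL, hLX⟩ := hgrad (Ψ p) (hΨU p hp)
  have hLsymm (X Y : Fin n → ℂ) : X ⬝ᵥ L Y = Y ⬝ᵥ L X := by
    simpa only [hLX] using dotProduct_mulVec_comm_of_isSymm_s9 (hsymm (Ψ p) (hΨU p hp)) X Y
  exact lagrangian_rel_ux_vy_general (hL.restrictScalars ℝ)
    (fun X Y => congrArg Complex.im (hLsymm X Y))
    ((hΨsmooth.contDiffAt hWp).differentiableAt (by simp)) (eventually_of_mem hWp hΨinv) i j
end

section
/- With the notation of the coordinate setup: for every index i ∈ {1,…,n} and at every point (x,y) ∈ W, ∂/∂x^i ( Im F(Ψ(x,y)) ) = v_i(x,y) + Σ_{j=1}^n (∂u^j/∂x^i)(x,y) · y_j. -/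
section HolomorphicChainRule

variable {E : Type*} [NormedAddCommGroup E] [NormedSpace ℝ E]

theorem fderiv_re_apply {f : E → ℂ} {p : E} (hf : DifferentiableAt ℝ f p) (w : E) :
    fderiv ℝ (fun q => (f q).re) p w = (fderiv ℝ f p w).re :=
  congrArg (· w) (Complex.reCLM.hasFDerivAt.comp p hf.hasFDerivAt).fderiv

theorem fderiv_im_apply_s12 {f : E → ℂ} {p : E} (hf : DifferentiableAt ℝ f p) (w : E) :
    fderiv ℝ (fun q => (f q).im) p w = (fderiv ℝ f p w).im :=
  congrArg (· w) (Complex.imCLM.hasFDerivAt.comp p hf.hasFDerivAt).fderiv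

variable {ι : Type*} [Fintype ι]

/-- `g` is the holomorphic gradient of `F` at `z`, i.e. the vector of the partial derivatives
`∂F/∂zᵏ`. The differential of `F` is the *bilinear* pairing with `g`, with no complex conjugation,
in contrast to Mathlib's `HasGradientAt`. -/
def HasHolomorphicGradientAt (F : (ι → ℂ) → ℂ) (g z : ι → ℂ) : Prop :=
  ∃ L : (ι → ℂ) →L[ℂ] ℂ, HasFDerivAt F L z ∧ ∀ X, L X = ∑ k, g k * X k

theorem HasHolomorphicGradientAt.fderiv_im_comp_apply {F : (ι → ℂ) → ℂ} {g : ι → ℂ}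
    {Ψ : E → ι → ℂ} {p : E} (hF : HasHolomorphicGradientAt F g (Ψ p))
    (hΨ : DifferentiableAt ℝ Ψ p) (w : E) :
    fderiv ℝ (fun q => (F (Ψ q)).im) p w =
      ∑ k, ((g k).im * fderiv ℝ (fun q => (Ψ q k).re) p w +
        fderiv ℝ (fun q => (Ψ q k).im) p w * (g k).re) := by
  obtain ⟨L, hL, hLg⟩ := hF
  have hFΨ : HasFDerivAt (fun q => F (Ψ q)) ((L.restrictScalars ℝ).comp (fderiv ℝ Ψ p)) p :=
    (hL.restrictScalars ℝ).comp p hΨ.hasFDerivAt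
  have hΨk (k : ι) : DifferentiableAt ℝ (fun q => Ψ q k) p := differentiableAt_pi.1 hΨ k
  calc
    fderiv ℝ (fun q => (F (Ψ q)).im) p w = (L (fderiv ℝ Ψ p w)).im := by
      rw [fderiv_im_apply_s12 hFΨ.differentiableAt, hFΨ.fderiv]
      rfl
    _ = ∑ k, (g k * fderiv ℝ Ψ p w k).im := by rw [hLg, Complex.im_sum]
    _ = _ := Finset.sum_congr rfl fun k _ => by
      rw [fderiv_re_apply (hΨk k), fderiv_im_apply_s12 (hΨk k), fderiv_apply hΨ k, Complex.mul_im]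
      simp only [ContinuousLinearMap.comp_apply, ContinuousLinearMap.proj_apply]
      ring

end HolomorphicChainRule

theorem pdx_fst_apply {n : ℕ} (i k : Fin n) (p : (Fin n → ℝ) × (Fin n → ℝ)) :
    pdx (fun q => q.1 k) i p = (Pi.single i 1 : Fin n → ℝ) k :=
  congrArg (· (Pi.single i 1, 0)) <| ContinuousLinearMap.fderiv <|
    (ContinuousLinearMap.proj (R := ℝ) (φ := fun _ : Fin n => ℝ) k).comp
      (ContinuousLinearMap.fst ℝ (Fin n → ℝ) (Fin n → ℝ))

theorem dx_imF_general {n : ℕ} {F : (Fin n → ℂ) → ℂ} {g : Fin n → ℂ}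
    {Ψ : (Fin n → ℝ) × (Fin n → ℝ) → Fin n → ℂ} {p : (Fin n → ℝ) × (Fin n → ℝ)}
    (hF : HasHolomorphicGradientAt F g (Ψ p)) (hΨ : DifferentiableAt ℝ Ψ p)
    (hre : ∀ᶠ q in nhds p, (fun k => (Ψ q k).re) = q.1) (hg : (fun k => (g k).re) = p.2)
    (i : Fin n) :
    pdx (fun q => (F (Ψ q)).im) i p = (g i).im + ∑ j, pdx (fun q => (Ψ q j).im) i p * p.2 j := by
  have hdx (k : Fin n) : pdx (fun q => (Ψ q k).re) i p = (Pi.single i 1 : Fin n → ℝ) k := by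
    have hcoord : (fun q => (Ψ q k).re) =ᶠ[nhds p] fun q => q.1 k :=
      hre.mono fun _ hq => congrFun hq k
    rw [← pdx_fst_apply i k p, pdx, pdx, hcoord.fderiv_eq]
  calc
    pdx (fun q => (F (Ψ q)).im) i p =
        ∑ k, ((g k).im * pdx (fun q => (Ψ q k).re) i p +
          pdx (fun q => (Ψ q k).im) i p * (g k).re) :=
      hF.fderiv_im_comp_apply hΨ (Pi.single i 1, 0)
    _ = ∑ k, (g k).im * (Pi.single i 1 : Fin n → ℝ) k +
        ∑ k, pdx (fun q => (Ψ q k).im) i p * (g k).re := by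
      simp only [hdx, Finset.sum_add_distrib]
    _ = (g i).im + ∑ j, pdx (fun q => (Ψ q j).im) i p * p.2 j := by
      simp [← hg, Pi.single_apply]

/-- `∂(Im F ∘ Ψ)/∂x^i = v_i + ∑_j (∂u^j/∂x^i) y_j` on `W`. -/
theorem dx_imF
    {n : ℕ} (hn : 1 ≤ n) (U : Set (Fin n → ℂ)) (hU : IsOpen U)
    (F : (Fin n → ℂ) → ℂ) (gradF : (Fin n → ℂ) → (Fin n → ℂ))
    (hessF : (Fin n → ℂ) → Matrix (Fin n) (Fin n) ℂ)
    (hF : ∀ z ∈ U, ∃ L : (Fin n → ℂ) →L[ℂ] ℂ,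
      HasFDerivAt F L z ∧ ∀ X, L X = ∑ k, gradF z k * X k)
    (hgrad : ∀ z ∈ U, ∃ L : (Fin n → ℂ) →L[ℂ] (Fin n → ℂ),
      HasFDerivAt gradF L z ∧ ∀ X, L X = (hessF z).mulVec X)
    (hsymm : ∀ z ∈ U, (hessF z).IsSymm)
    (hnondeg : ∀ z ∈ U, IsUnit ((hessF z).map Complex.im))
    (W : Set ((Fin n → ℝ) × (Fin n → ℝ))) (hW : IsOpen W)
    (Ψ : (Fin n → ℝ) × (Fin n → ℝ) → (Fin n → ℂ))
    (hΨU : ∀ p ∈ W, Ψ p ∈ U)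
    (hΨsmooth : ContDiffOn ℝ (⊤ : ℕ∞) Ψ W)
    (hΨinv : ∀ p ∈ W,
      ((fun i => (Ψ p i).re, fun i => (gradF (Ψ p) i).re) :
        (Fin n → ℝ) × (Fin n → ℝ)) = p) :
    ∀ i : Fin n, ∀ p ∈ W,
      pdx (fun q => (F (Ψ q)).im) i p
        = (gradF (Ψ p) i).im + ∑ j, pdx (fun q => (Ψ q j).im) i p * p.2 j :=
  fun i p hp =>
    have hWp : W ∈ nhds p := hW.mem_nhds hp
    dx_imF_general (hF _ (hΨU p hp)) ((hΨsmooth.differentiableOn (by simp)).differentiableAt hWp)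
      (Filter.eventually_of_mem hWp fun q hq => congrArg Prod.fst (hΨinv q hq))
      (congrArg Prod.snd (hΨinv p hp)) i
end

section
/- With the notation of the coordinate setup, define f : W → ℝ by f(x,y) = 2 Im F(Ψ(x,y)) − 2 Σ_{k=1}^n y_k u^k(x,y). Then for all i, j ∈ {1,…,n} and at every point of W: ∂²f/∂x^i∂x^j = 2 ∂v_i/∂x^j, ∂²f/∂x^i∂y_j = −2 ∂u^j/∂x^i, and ∂²f/∂y_i∂y_j = −2 ∂u^i/∂y_j. -/
/-!
Write `z = x + i u` and `∇F = y + i v`. Then `d(Im F) = Im (∑ₖ ∂F/∂zᵏ dzᵏ) = ∑ₖ (vₖ dxᵏ + yₖ duᵏ)`,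
so subtracting `∑ₖ yₖ uᵏ` trades `u` for `y` and leaves `d(f / 2) = ∑ₖ (vₖ dxᵏ - uᵏ dyₖ)`: up to
sign, `f / 2` is the Legendre transform of `Im F` in the variables `u`. The second partial
derivatives of `f` are thus first partial derivatives of `v` and `u`, and Young's theorem exchanges
the two indices where needed.
-/

open Topology

theorem fderiv_fderiv_apply_comm {𝕜 E G : Type*} [NontriviallyNormedField 𝕜]
    [IsRCLikeNormedField 𝕜] [NormedAddCommGroup E] [NormedSpace 𝕜 E] [NormedAddCommGroup G]
    [NormedSpace 𝕜 G] {f : E → G} {p : E}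
    (hf : ∀ᶠ q in 𝓝 p, DifferentiableAt 𝕜 f q) (hf' : DifferentiableAt 𝕜 (fderiv 𝕜 f) p)
    (v w : E) :
    fderiv 𝕜 (fun q => fderiv 𝕜 f q w) p v = fderiv 𝕜 (fun q => fderiv 𝕜 f q v) p w := by
  have fderiv_apply (a b : E) :
      fderiv 𝕜 (fun q => fderiv 𝕜 f q a) p b = fderiv 𝕜 (fderiv 𝕜 f) p b a := by
    simp [fderiv_clm_apply hf' (differentiableAt_const a)]
  rw [fderiv_apply, fderiv_apply]
  exact second_derivative_symmetric_of_eventually (hf.mono fun _ hq => hq.hasFDerivAt)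
    hf'.hasFDerivAt v w

section PartialDerivatives

/-- The coordinate covector `dxᵏ` on `ℝⁿ × ℝⁿ`. -/
abbrev dx {n : ℕ} (k : Fin n) : (Fin n → ℝ) × (Fin n → ℝ) →L[ℝ] ℝ :=
  (ContinuousLinearMap.proj k).comp (.fst ℝ (Fin n → ℝ) (Fin n → ℝ))

/-- The coordinate covector `dyₖ` on `ℝⁿ × ℝⁿ`. -/
abbrev dy {n : ℕ} (k : Fin n) : (Fin n → ℝ) × (Fin n → ℝ) →L[ℝ] ℝ :=
  (ContinuousLinearMap.proj k).comp (.snd ℝ (Fin n → ℝ) (Fin n → ℝ))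

variable {n : ℕ} {f g : (Fin n → ℝ) × (Fin n → ℝ) → ℝ} {p : (Fin n → ℝ) × (Fin n → ℝ)}

theorem pdx_const_mul (c : ℝ) (i : Fin n) : pdx (fun q => c * f q) i p = c * pdx f i p :=
  DFunLike.congr_fun (congrFun (fderiv_const_smul_field c) p) _

theorem pdy_const_mul (c : ℝ) (i : Fin n) : pdy (fun q => c * f q) i p = c * pdy f i p :=
  DFunLike.congr_fun (congrFun (fderiv_const_smul_field c) p) _

theorem pdx_congr (h : f =ᶠ[𝓝 p] g) (i : Fin n) : pdx f i p = pdx g i p := by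
  rw [pdx, pdx, h.fderiv_eq]

theorem pdy_congr (h : f =ᶠ[𝓝 p] g) (i : Fin n) : pdy f i p = pdy g i p := by
  rw [pdy, pdy, h.fderiv_eq]

theorem fderiv_eq_sum_pdx_add_pdy (f : (Fin n → ℝ) × (Fin n → ℝ) → ℝ)
    (p : (Fin n → ℝ) × (Fin n → ℝ)) :
    fderiv ℝ f p = ∑ k, (pdx f k p • dx k + pdy f k p • dy k) := by
  apply ContinuousLinearMap.coe_injective
  ext k <;> simp [pdx, pdy, Pi.single_apply]

theorem differentiableAt_fderiv_of_pdx_of_pdy (hx : ∀ k, DifferentiableAt ℝ (pdx f k) p)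
    (hy : ∀ k, DifferentiableAt ℝ (pdy f k) p) : DifferentiableAt ℝ (fderiv ℝ f) p := by
  rw [funext (fderiv_eq_sum_pdx_add_pdy f)]
  fun_prop

theorem pdx_pdx_comm (hf : ∀ᶠ q in 𝓝 p, DifferentiableAt ℝ f q)
    (hx : ∀ k, DifferentiableAt ℝ (pdx f k) p) (hy : ∀ k, DifferentiableAt ℝ (pdy f k) p)
    (i j : Fin n) : pdx (pdx f j) i p = pdx (pdx f i) j p :=
  fderiv_fderiv_apply_comm hf (differentiableAt_fderiv_of_pdx_of_pdy hx hy) _ _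

theorem pdy_pdy_comm (hf : ∀ᶠ q in 𝓝 p, DifferentiableAt ℝ f q)
    (hx : ∀ k, DifferentiableAt ℝ (pdx f k) p) (hy : ∀ k, DifferentiableAt ℝ (pdy f k) p)
    (i j : Fin n) : pdy (pdy f j) i p = pdy (pdy f i) j p :=
  fderiv_fderiv_apply_comm hf (differentiableAt_fderiv_of_pdx_of_pdy hx hy) _ _

end PartialDerivatives

section Legendre

theorem hasFDerivAt_im_comp_sub_sum_mul_im {E ι : Type*} [NormedAddCommGroup E]
    [NormedSpace ℝ E] [Fintype ι] {F : (ι → ℂ) → ℂ} {L : (ι → ℂ) →L[ℂ] ℂ} {c : ι → ℂ}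
    {Ψ : E → ι → ℂ} {y : E → ι → ℝ} {x' y' : ι → E →L[ℝ] ℝ} {q : E}
    (hF : HasFDerivAt F L (Ψ q)) (hL : ∀ X, L X = ∑ k, c k * X k)
    (hΨ : DifferentiableAt ℝ Ψ q) (hx : ∀ k, HasFDerivAt (fun r => (Ψ r k).re) (x' k) q)
    (hy : ∀ k, HasFDerivAt (fun r => y r k) (y' k) q) (hc : ∀ k, (c k).re = y q k) :
    HasFDerivAt (fun r => (F (Ψ r)).im - ∑ k, y r k * (Ψ r k).im)
      (∑ k, ((c k).im • x' k - (Ψ q k).im • y' k)) q := by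
  set D := fderiv ℝ Ψ q
  have hΨ_apply (k : ι) : HasFDerivAt (fun r => Ψ r k) ((ContinuousLinearMap.proj k).comp D) q :=
    hasFDerivAt_pi'.1 hΨ.hasFDerivAt k
  have hu (k : ι) : HasFDerivAt (fun r => (Ψ r k).im)
      (Complex.imCLM.comp ((ContinuousLinearMap.proj k).comp D)) q :=
    Complex.imCLM.hasFDerivAt.comp q (hΨ_apply k)
  have hImF : HasFDerivAt (fun r => (F (Ψ r)).im)
      (Complex.imCLM.comp ((L.restrictScalars ℝ).comp D)) q :=
    Complex.imCLM.hasFDerivAt.comp q ((hF.restrictScalars ℝ).comp q hΨ.hasFDerivAt)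
  have re_D_apply (k : ι) (X : E) : (D X k).re = x' k X :=
    DFunLike.congr_fun ((Complex.reCLM.hasFDerivAt.comp q (hΨ_apply k)).unique (hx k)) X
  refine (hImF.sub (HasFDerivAt.fun_sum fun k _ => (hy k).mul (hu k))).congr_fderiv ?_
  ext X
  simp only [sub_apply, smul_apply, add_apply, sum_apply, ContinuousLinearMap.comp_apply,
    ContinuousLinearMap.coe_restrictScalars', ContinuousLinearMap.proj_apply, smul_eq_mul,
    hL, Complex.imCLM_apply, Complex.im_sum, Complex.mul_im, re_D_apply, hc,
    ← Finset.sum_sub_distrib]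
  exact Finset.sum_congr rfl fun k _ => by ring

/-- `Ψ` is a right inverse of `z ↦ (Re z, Re (G z))` over the open set `W`, where `G` is the
holomorphic gradient of `F` (required only along `Ψ`): `(x, y) ∈ W` are conjugate special
coordinates of the point `Ψ (x, y)`. -/
structure IsConjugateChart {n : ℕ} (F : (Fin n → ℂ) → ℂ) (G : (Fin n → ℂ) → Fin n → ℂ)
    (Ψ : (Fin n → ℝ) × (Fin n → ℝ) → Fin n → ℂ) (W : Set ((Fin n → ℝ) × (Fin n → ℝ))) :
    Prop where
  isOpen : IsOpen W
  differentiableAt : ∀ q ∈ W, DifferentiableAt ℝ Ψ q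
  exists_hasFDerivAt : ∀ q ∈ W, ∃ L : (Fin n → ℂ) →L[ℂ] ℂ,
    HasFDerivAt F L (Ψ q) ∧ ∀ X, L X = ∑ k, G (Ψ q) k * X k
  re_apply : ∀ q ∈ W, ∀ k, (Ψ q k).re = q.1 k
  re_grad_apply : ∀ q ∈ W, ∀ k, (G (Ψ q) k).re = q.2 k

/-- The partial Legendre transform of `Im F` in the variables `u = Im z`, up to sign, written in
the coordinates `(x, y)` of `z = Ψ (x, y)`: the variable conjugate to `u k` is
`∂(Im F)/∂(u k) = Re (∂F/∂(z k)) = y k`. -/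
noncomputable def partialLegendre {n : ℕ} (F : (Fin n → ℂ) → ℂ)
    (Ψ : (Fin n → ℝ) × (Fin n → ℝ) → Fin n → ℂ) (q : (Fin n → ℝ) × (Fin n → ℝ)) : ℝ :=
  (F (Ψ q)).im - ∑ k, q.2 k * (Ψ q k).im

namespace IsConjugateChart

variable {n : ℕ} {F : (Fin n → ℂ) → ℂ} {G : (Fin n → ℂ) → Fin n → ℂ}
  {Ψ : (Fin n → ℝ) × (Fin n → ℝ) → Fin n → ℂ} {W : Set ((Fin n → ℝ) × (Fin n → ℝ))}
  {p : (Fin n → ℝ) × (Fin n → ℝ)}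

theorem hasFDerivAt_partialLegendre (h : IsConjugateChart F G Ψ W) (hp : p ∈ W) :
    HasFDerivAt (partialLegendre F Ψ)
      (∑ k, ((G (Ψ p) k).im • dx k - (Ψ p k).im • dy k)) p := by
  obtain ⟨L, hFL, hL⟩ := h.exists_hasFDerivAt p hp
  have hx (k : Fin n) : HasFDerivAt (fun r => (Ψ r k).re) (dx k) p := by
    refine (dx k).hasFDerivAt.congr_of_eventuallyEq ?_
    filter_upwards [h.isOpen.mem_nhds hp] with r hr using h.re_apply r hr k
  exact hasFDerivAt_im_comp_sub_sum_mul_im hFL hL (h.differentiableAt p hp) hx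
    (fun k => (dy k).hasFDerivAt) (h.re_grad_apply p hp)

theorem pdx_partialLegendre (h : IsConjugateChart F G Ψ W) (hp : p ∈ W) (j : Fin n) :
    pdx (partialLegendre F Ψ) j p = (G (Ψ p) j).im := by
  simp [pdx, (h.hasFDerivAt_partialLegendre hp).fderiv, Pi.single_apply]

theorem pdy_partialLegendre (h : IsConjugateChart F G Ψ W) (hp : p ∈ W) (j : Fin n) :
    pdy (partialLegendre F Ψ) j p = -(Ψ p j).im := by
  simp [pdy, (h.hasFDerivAt_partialLegendre hp).fderiv, Pi.single_apply]

theorem pdx_partialLegendre_eventuallyEq (h : IsConjugateChart F G Ψ W) (hp : p ∈ W)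
    (j : Fin n) : pdx (partialLegendre F Ψ) j =ᶠ[𝓝 p] fun q => (G (Ψ q) j).im := by
  filter_upwards [h.isOpen.mem_nhds hp] with q hq using h.pdx_partialLegendre hq j

theorem pdy_partialLegendre_eventuallyEq (h : IsConjugateChart F G Ψ W) (hp : p ∈ W)
    (j : Fin n) : pdy (partialLegendre F Ψ) j =ᶠ[𝓝 p] fun q => -1 * (Ψ q j).im := by
  filter_upwards [h.isOpen.mem_nhds hp] with q hq
  rw [h.pdy_partialLegendre hq, neg_one_mul]

theorem eventually_differentiableAt_partialLegendre (h : IsConjugateChart F G Ψ W)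
    (hp : p ∈ W) : ∀ᶠ q in 𝓝 p, DifferentiableAt ℝ (partialLegendre F Ψ) q := by
  filter_upwards [h.isOpen.mem_nhds hp] with q hq
    using (h.hasFDerivAt_partialLegendre hq).differentiableAt

theorem differentiableAt_pdx_partialLegendre (h : IsConjugateChart F G Ψ W) (hp : p ∈ W)
    (hG : DifferentiableAt ℝ G (Ψ p)) (j : Fin n) :
    DifferentiableAt ℝ (pdx (partialLegendre F Ψ) j) p := by
  have hGΨ : DifferentiableAt ℝ (fun q => G (Ψ q) j) p :=
    differentiableAt_pi.1 (hG.comp p (h.differentiableAt p hp)) j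
  exact (Complex.imCLM.differentiableAt.comp p hGΨ).congr_of_eventuallyEq
    (h.pdx_partialLegendre_eventuallyEq hp j)

theorem differentiableAt_pdy_partialLegendre (h : IsConjugateChart F G Ψ W) (hp : p ∈ W)
    (j : Fin n) : DifferentiableAt ℝ (pdy (partialLegendre F Ψ) j) p := by
  have hΨ : DifferentiableAt ℝ (fun q => Ψ q j) p :=
    differentiableAt_pi.1 (h.differentiableAt p hp) j
  exact ((Complex.imCLM.differentiableAt.comp p hΨ).const_mul (-1)).congr_of_eventuallyEq
    (h.pdy_partialLegendre_eventuallyEq hp j)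

theorem pdx_pdx_partialLegendre (h : IsConjugateChart F G Ψ W) (hp : p ∈ W)
    (hG : DifferentiableAt ℝ G (Ψ p)) (i j : Fin n) :
    pdx (pdx (partialLegendre F Ψ) j) i p = pdx (fun q => (G (Ψ q) i).im) j p := by
  rw [pdx_pdx_comm (h.eventually_differentiableAt_partialLegendre hp)
    (h.differentiableAt_pdx_partialLegendre hp hG) (h.differentiableAt_pdy_partialLegendre hp),
    pdx_congr (h.pdx_partialLegendre_eventuallyEq hp i)]

theorem pdx_pdy_partialLegendre (h : IsConjugateChart F G Ψ W) (hp : p ∈ W) (i j : Fin n) :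
    pdx (pdy (partialLegendre F Ψ) j) i p = -pdx (fun q => (Ψ q j).im) i p := by
  rw [pdx_congr (h.pdy_partialLegendre_eventuallyEq hp j), pdx_const_mul, neg_one_mul]

theorem pdy_pdy_partialLegendre (h : IsConjugateChart F G Ψ W) (hp : p ∈ W)
    (hG : DifferentiableAt ℝ G (Ψ p)) (i j : Fin n) :
    pdy (pdy (partialLegendre F Ψ) j) i p = -pdy (fun q => (Ψ q i).im) j p := by
  rw [pdy_pdy_comm (h.eventually_differentiableAt_partialLegendre hp)
    (h.differentiableAt_pdx_partialLegendre hp hG) (h.differentiableAt_pdy_partialLegendre hp),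
    pdy_congr (h.pdy_partialLegendre_eventuallyEq hp i), pdy_const_mul, neg_one_mul]

end IsConjugateChart

end Legendre

/-- with `f = 2 Im F ∘ Ψ − 2 ∑_k y_k u^k`, on `W` one has `∂²f/∂x^i∂x^j = 2 ∂v_i/∂x^j`, `∂²f/∂x^i∂y_j = −2 ∂u^j/∂x^i` and `∂²f/∂y_i∂y_j = −2 ∂u^i/∂y_j`. -/
theorem hessian_of_f
    {n : ℕ} (hn : 1 ≤ n) (U : Set (Fin n → ℂ)) (hU : IsOpen U)
    (F : (Fin n → ℂ) → ℂ) (gradF : (Fin n → ℂ) → (Fin n → ℂ))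
    (hessF : (Fin n → ℂ) → Matrix (Fin n) (Fin n) ℂ)
    (hF : ∀ z ∈ U, ∃ L : (Fin n → ℂ) →L[ℂ] ℂ,
      HasFDerivAt F L z ∧ ∀ X, L X = ∑ k, gradF z k * X k)
    (hgrad : ∀ z ∈ U, ∃ L : (Fin n → ℂ) →L[ℂ] (Fin n → ℂ),
      HasFDerivAt gradF L z ∧ ∀ X, L X = (hessF z).mulVec X)
    (hsymm : ∀ z ∈ U, (hessF z).IsSymm)
    (hnondeg : ∀ z ∈ U, IsUnit ((hessF z).map Complex.im))
    (W : Set ((Fin n → ℝ) × (Fin n → ℝ))) (hW : IsOpen W)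
    (Ψ : (Fin n → ℝ) × (Fin n → ℝ) → (Fin n → ℂ))
    (hΨU : ∀ p ∈ W, Ψ p ∈ U)
    (hΨsmooth : ContDiffOn ℝ (⊤ : ℕ∞) Ψ W)
    (hΨinv : ∀ p ∈ W,
      ((fun i => (Ψ p i).re, fun i => (gradF (Ψ p) i).re) :
        (Fin n → ℝ) × (Fin n → ℝ)) = p)
    (f : (Fin n → ℝ) × (Fin n → ℝ) → ℝ)
    (hf : ∀ q, f q = 2 * (F (Ψ q)).im - 2 * ∑ k, q.2 k * (Ψ q k).im) :
    ∀ i j : Fin n, ∀ p ∈ W,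
      pdx (fun q => pdx f j q) i p = 2 * pdx (fun q => (gradF (Ψ q) i).im) j p ∧
      pdx (fun q => pdy f j q) i p = -2 * pdx (fun q => (Ψ q j).im) i p ∧
      pdy (fun q => pdy f j q) i p = -2 * pdy (fun q => (Ψ q i).im) j p := by
  have chart : IsConjugateChart F gradF Ψ W :=
    { isOpen := hW
      differentiableAt := fun q hq =>
        (hΨsmooth.contDiffAt (hW.mem_nhds hq)).differentiableAt (by simp)
      exists_hasFDerivAt := fun q hq => hF (Ψ q) (hΨU q hq)
      re_apply := fun q hq => congrFun (congrArg Prod.fst (hΨinv q hq))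
      re_grad_apply := fun q hq => congrFun (congrArg Prod.snd (hΨinv q hq)) }
  obtain rfl : f = fun q => 2 * partialLegendre F Ψ q :=
    funext fun q => by rw [hf, partialLegendre, mul_sub]
  intro i j p hp
  obtain ⟨L, hL, -⟩ := hgrad (Ψ p) (hΨU p hp)
  have hG : DifferentiableAt ℝ gradF (Ψ p) := (hL.restrictScalars ℝ).differentiableAt
  simp [pdx_const_mul, pdy_const_mul, chart.pdx_pdx_partialLegendre hp hG,
    chart.pdx_pdy_partialLegendre hp, chart.pdy_pdy_partialLegendre hp hG]
end
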